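/- Suppose stage cost c : ℕ × ℕ → ℝ satisfies c(τ₁, τ₂) ≥ K·ρ^{max(τ₁,τ₂)} for constants K > 0 and ρ > 1. Then for the deterministic two-action chain where action 1 maps (τ₁, τ₂) ↦ (1, τ₂+1) and action 2 maps (τ₁, τ₂) ↦ (τ₁+1, 1), any policy whose trajectory visits states with max(τ₁, τ₂) unbounded has limsup average cost equal to +∞, whereas the alternating policy achieves a finite average cost; hence any average-cost-optimal policy produces a trajectory confined to a finite set of states. -/

import Mathlib

open Filter

/-- One step of the two-action chain under policy `π` (action 1 if `π s = true`). -/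
def schedStep (π : ℕ × ℕ → Bool) (s : ℕ × ℕ) : ℕ × ℕ :=
  if π s then (1, s.2 + 1) else (s.1 + 1, 1)

/-- Trajectory of the chain under policy `π` from `s₀`. -/
def schedTraj (π : ℕ × ℕ → Bool) (s₀ : ℕ × ℕ) (k : ℕ) : ℕ × ℕ :=
  (schedStep π)^[k] s₀

/-- Limsup average cost (as an extended real) of policy `π` from `s₀`. -/
noncomputable def schedAvgCost (c : ℕ × ℕ → ℝ) (π : ℕ × ℕ → Bool) (s₀ : ℕ × ℕ) : EReal :=
  limsup (fun T : ℕ => (((∑ k ∈ Finset.range T, c (schedTraj π s₀ k)) / T : ℝ) : EReal)) atTop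


lemma traj_succ (π : ℕ × ℕ → Bool) (s₀ : ℕ × ℕ) (k : ℕ) :
    schedTraj π s₀ (k + 1) = schedStep π (schedTraj π s₀ k) := by
  simp only [schedTraj, Function.iterate_succ_apply']

lemma box_finite (M : ℕ) : {s : ℕ × ℕ | max s.1 s.2 ≤ M}.Finite := by
  refine (Set.finite_Iic ((M, M) : ℕ × ℕ)).subset ?_
  rintro ⟨a, b⟩ h
  simpa using h

lemma range_finite_of_eq (π : ℕ × ℕ → Bool) (s₀ : ℕ × ℕ) (i j : ℕ) (hij : i < j)
    (h : schedTraj π s₀ i = schedTraj π s₀ j) : (Set.range (schedTraj π s₀)).Finite := by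
  refine ((Finset.range j).image (schedTraj π s₀)).finite_toSet.subset ?_
  rintro _ ⟨k, rfl⟩
  induction k with
  | zero =>
    simp only [Finset.coe_image, Set.mem_image, Finset.mem_coe, Finset.mem_range]
    exact ⟨0, by omega, rfl⟩
  | succ k ih =>
    simp only [Finset.coe_image, Set.mem_image, Finset.mem_coe, Finset.mem_range] at ih ⊢
    obtain ⟨m, hm, e⟩ := ih
    rcases Nat.lt_or_ge (m + 1) j with h1 | h1
    · exact ⟨m + 1, h1, by rw [traj_succ, traj_succ, e]⟩
    · have : m + 1 = j := by omega
      exact ⟨i, hij, by rw [h, ← this, traj_succ, traj_succ, e]⟩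

lemma avg_top (c : ℕ × ℕ → ℝ) (K ρ : ℝ) (hK : 0 < K) (hρ : 1 < ρ)
    (hc : ∀ s : ℕ × ℕ, K * ρ ^ max s.1 s.2 ≤ c s) (π : ℕ × ℕ → Bool) (s₀ : ℕ × ℕ)
    (hinf : ¬ (Set.range (schedTraj π s₀)).Finite) : schedAvgCost c π s₀ = ⊤ := by
  have hinj : Function.Injective (schedTraj π s₀) := by
    intro i j h
    by_contra hne
    rcases Nat.lt_or_gt_of_ne hne with h1 | h1
    · exact hinf (range_finite_of_eq π s₀ i j h1 h)
    · exact hinf (range_finite_of_eq π s₀ j i h1 h.symm)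
  have hpos : ∀ s, 0 ≤ c s := fun s => le_trans (by positivity) (hc s)
  have key : ∀ B : ℝ, 0 ≤ B → ∀ᶠ T : ℕ in atTop,
      B ≤ (∑ k ∈ Finset.range T, c (schedTraj π s₀ k)) / T := by
    intro B hB
    obtain ⟨M, hM⟩ := pow_unbounded_of_one_lt (2 * B / K) hρ
    have hfin : {k | max (schedTraj π s₀ k).1 (schedTraj π s₀ k).2 ≤ M}.Finite :=
      (box_finite M).preimage hinj.injOn
    obtain ⟨N, hN⟩ := hfin.bddAbove
    have hbig : ∀ k, N + 1 ≤ k → 2 * B ≤ c (schedTraj π s₀ k) := by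
      intro k hk
      have h1 : M ≤ max (schedTraj π s₀ k).1 (schedTraj π s₀ k).2 := by
        by_contra h
        have : k ≤ N := hN (show _ ≤ M from (not_le.mp h).le)
        omega
      have h2 : ρ ^ M ≤ ρ ^ max (schedTraj π s₀ k).1 (schedTraj π s₀ k).2 :=
        pow_le_pow_right₀ hρ.le h1
      have h3 : 2 * B < ρ ^ M * K := (div_lt_iff₀ hK).mp hM
      have h4 := hc (schedTraj π s₀ k)
      have h5 := mul_le_mul_of_nonneg_left h2 hK.le
      linarith
    filter_upwards [eventually_ge_atTop (2 * (N + 1))] with T hT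
    have hT0 : (0 : ℝ) < T := by
      have : 0 < T := by omega
      exact_mod_cast this
    rw [le_div_iff₀ hT0]
    have hsum : ∑ k ∈ Finset.Ico (N + 1) T, (2 * B) ≤
        ∑ k ∈ Finset.range T, c (schedTraj π s₀ k) := by
      refine (Finset.sum_le_sum (fun k hk => hbig k (Finset.mem_Ico.mp hk).1)).trans ?_
      refine Finset.sum_le_sum_of_subset_of_nonneg ?_ (fun _ _ _ => hpos _)
      intro k hk
      simp only [Finset.mem_Ico, Finset.mem_range] at hk ⊢
      exact hk.2
    rw [Finset.sum_const, Nat.card_Ico, nsmul_eq_mul, Nat.cast_sub (by omega)] at hsum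
    have hT' : (2 : ℝ) * ((N + 1 : ℕ) : ℝ) ≤ T := by exact_mod_cast hT
    nlinarith
  have ht : Tendsto (fun T : ℕ =>
      (((∑ k ∈ Finset.range T, c (schedTraj π s₀ k)) / T : ℝ) : EReal)) atTop (nhds ⊤) := by
    rw [EReal.tendsto_nhds_top_iff_real]
    intro x
    filter_upwards [key (|x| + 1) (by positivity)] with T hT
    have := le_abs_self x
    exact EReal.coe_lt_coe_iff.mpr (by linarith)
  exact ht.limsup_eq

lemma avg_lt_top (c : ℕ × ℕ → ℝ) (hpos : ∀ s, 0 ≤ c s) (π : ℕ × ℕ → Bool) (s₀ : ℕ × ℕ)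
    (hfin : (Set.range (schedTraj π s₀)).Finite) : schedAvgCost c π s₀ < ⊤ := by
  obtain ⟨C, hC⟩ := (hfin.image c).bddAbove
  have hle : ∀ k, c (schedTraj π s₀ k) ≤ C := fun k => hC ⟨_, ⟨k, rfl⟩, rfl⟩
  have hC0 : 0 ≤ C := (hpos _).trans (hle 0)
  refine lt_of_le_of_lt ?_ (EReal.coe_lt_top C)
  refine limsup_le_of_le (by isBoundedDefault) (Eventually.of_forall fun T => ?_)
  refine EReal.coe_le_coe_iff.mpr (div_le_of_le_mul₀ (by positivity) hC0 ?_)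
  refine (Finset.sum_le_sum (fun k _ => hle k)).trans ?_
  simp [mul_comm]

lemma alt_finite (s₀ : ℕ × ℕ) :
    (Set.range (schedTraj (fun s => decide (s.2 ≤ s.1)) s₀)).Finite := by
  obtain ⟨a, b⟩ := s₀
  refine (Set.toFinite ({(a, b), (1, b + 1), (a + 1, 1), (1, 2), (2, 1)} : Set (ℕ × ℕ))).subset ?_
  rintro _ ⟨k, rfl⟩
  induction k with
  | zero => left; rfl
  | succ k ih =>
    rw [traj_succ]
    simp only [Set.mem_insert_iff, Set.mem_singleton_iff] at ih ⊢
    rcases ih with h | h | h | h | h <;> rw [h] <;>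
      simp only [schedStep, decide_eq_true_eq] <;> split_ifs <;> simp <;> omega

/-- If the stage cost grows geometrically in `max(τ₁,τ₂)`, then any policy visiting states
with unbounded `max(τ₁,τ₂)` has infinite limsup average cost, the alternating policy has
finite average cost, and hence an average-cost-optimal policy stays in a finite set. -/
theorem optimal_policy_finite_states (c : ℕ × ℕ → ℝ) (K ρ : ℝ) (hK : 0 < K) (hρ : 1 < ρ)
    (hc : ∀ s : ℕ × ℕ, K * ρ ^ max s.1 s.2 ≤ c s) :
    (∀ (π : ℕ × ℕ → Bool) (s₀ : ℕ × ℕ),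
        (∀ M : ℕ, ∃ k : ℕ, M ≤ max (schedTraj π s₀ k).1 (schedTraj π s₀ k).2) →
        schedAvgCost c π s₀ = ⊤) ∧
    (∀ s₀ : ℕ × ℕ, schedAvgCost c (fun s => decide (s.2 ≤ s.1)) s₀ < ⊤) ∧
    (∀ (π : ℕ × ℕ → Bool) (s₀ : ℕ × ℕ),
        (∀ π' : ℕ × ℕ → Bool, schedAvgCost c π s₀ ≤ schedAvgCost c π' s₀) →
        (Set.range (schedTraj π s₀)).Finite) := by
  have hpos : ∀ s, 0 ≤ c s := fun s => le_trans (by positivity) (hc s)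
  refine ⟨fun π s₀ h => ?_, fun s₀ => avg_lt_top c hpos _ s₀ (alt_finite s₀), fun π s₀ h => ?_⟩
  · refine avg_top c K ρ hK hρ hc π s₀ fun hfin => ?_
    obtain ⟨C, hC⟩ := (hfin.image (fun s : ℕ × ℕ => max s.1 s.2)).bddAbove
    obtain ⟨k, hk⟩ := h (C + 1)
    have : max (schedTraj π s₀ k).1 (schedTraj π s₀ k).2 ≤ C := hC ⟨_, ⟨k, rfl⟩, rfl⟩
    omega
  · by_contra hinf
    have h1 := avg_top c K ρ hK hρ hc π s₀ hinf
    have h2 := (h _).trans_lt (avg_lt_top c hpos _ s₀ (alt_finite s₀))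
    exact absurd h1 h2.ne
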